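/- arXiv:1602.00768 — 2 statements merged into one kernel-verified Lean document; each statement's English description precedes it below -/
import Mathlib

section
/- Let Q be the set of complete flags (0 = L_0 ⊂ L_1 ⊂ ⋯ ⊂ L_N) of subspaces of V with dim L_i = i, z L_i ⊆ L_{i−1} for all 1 ≤ i ≤ N, and P(L_N) = W. For (L_•) ∈ Q the projection P restricts to a linear isomorphism L_N → W, and the map α sending (L_•) to the pair ((P L_1 ⊂ P L_2 ⊂ ⋯ ⊂ P L_N = W), x) with x = P ∘ z ∘ (P|_{L_N})^{−1}, is a well-defined bijection from Q onto the set of pairs ((V_1 ⊂ ⋯ ⊂ V_N = ℂ^N), x) where (V_i) is a complete flag in ℂ^N (dim V_i = i), x ∈ S_n', and x V_i ⊆ V_{i−1} for all 1 ≤ i ≤ N (with V_0 = 0). (Lemma 2.7 of the paper: the set-theoretic isomorphism Q_{m+2n} ≅ S_n' ×_{sl} T*B_n.) -/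
/-!
Every vector `v` of `V` is determined by the vectors `P z^k v`, since its coordinates along
`ê_{k+1}` and `f̂_{k+1}` are the coordinates of `P z^k v` along `u_1` and `u_{m+n+1}`. If `L` is
`z`-stable and `x P = P z` on `L`, then `P z^k v = x^k P v` for `v ∈ L`, so `v` is determined by
`P v` and `x`, and `L` by `P L` and `x`: this is injectivity.

Conversely, the slice `S_n'` consists of the `x` that shift the coordinates inside each of the two
blocks of `W`. For such an `x` with `x^N = 0`, the map `s : W → V` whose coordinates along
`ê_{k+1}` and `f̂_{k+1}` are `(x^k w)_1` and `(x^k w)_{m+n+1}` satisfies `P s = id` and `z s = s x`,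
so that `L_i = s V_i` is a flag in `Q` lying over `((V_i), x)`.
-/

open Module BigOperators

noncomputable section

/-- The `k`-th standard basis vector `u_k` of `ℂ^(m+2n)`, indexed `1`-based;
it is zero if `k` is out of the range `1, …, m+2n`. -/
def stdVec (m n : ℕ) (k : ℕ) : Fin (m + 2*n) → ℂ := fun i => if (i : ℕ) + 1 = k then 1 else 0

/-- The matrix of the two-block nilpotent `z_n` of Jordan type `(m+n, n)`:
`z_n u_i = u_{i-1}` for `2 ≤ i ≤ m+n` and for `m+n+2 ≤ i ≤ m+2n`, and
`z_n u_1 = z_n u_{m+n+1} = 0`. -/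
def zMat (m n : ℕ) : Matrix (Fin (m + 2*n)) (Fin (m + 2*n)) ℂ :=
  fun i j => if (j : ℕ) = (i : ℕ) + 1 ∧ (j : ℕ) ≠ m + n then 1 else 0

/-- The two-block nilpotent `z_n` as an endomorphism of `ℂ^(m+2n)`. -/
def zn (m n : ℕ) : Module.End ℂ (Fin (m + 2*n) → ℂ) := Matrix.toLin' (zMat m n)

/-- The enlarged slice `S_n' ⊆ End(ℂ^(m+2n))`: the endomorphisms whose matrix agrees
with that of `z_n` outside rows `m+n` and `m+2n`, i.e. `x u_j - z_n u_j` lies in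
`span{u_{m+n}, u_{m+2n}}` for every `j`. -/
def slice' (m n : ℕ) : Set (Module.End ℂ (Fin (m + 2*n) → ℂ)) :=
  { x | ∀ j : ℕ, x (stdVec m n j) - zn m n (stdVec m n j) ∈
      Submodule.span ℂ {stdVec m n (m + n), stdVec m n (m + 2*n)} }

/-- The standard basis of `V = ℂ^(2(m+2n))`, indexed `1`-based: for `1 ≤ k ≤ m+2n`,
`bigVec k` is `ê_k`, and for `1 ≤ j ≤ m+2n`, `bigVec (m+2n+j)` is `f̂_j`. -/
def bigVec (m n : ℕ) (k : ℕ) : Fin (2*(m + 2*n)) → ℂ := fun i => if (i : ℕ) + 1 = k then 1 else 0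

/-- The matrix of `z ∈ End(V)`, `z ê_i = ê_{i-1}`, `z f̂_j = f̂_{j-1}` (`ê_0 = f̂_0 = 0`). -/
def bigZMat (m n : ℕ) : Matrix (Fin (2*(m + 2*n))) (Fin (2*(m + 2*n))) ℂ :=
  fun i j => if (j : ℕ) = (i : ℕ) + 1 ∧ (j : ℕ) ≠ m + 2*n then 1 else 0

/-- The endomorphism `z` of `V = ℂ^(2(m+2n))`. -/
def bigZ (m n : ℕ) : Module.End ℂ (Fin (2*(m + 2*n)) → ℂ) := Matrix.toLin' (bigZMat m n)

/-- The matrix of the projection `P : V → W ≅ ℂ^(m+2n)`: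
`P ê_i = u_i` for `i ≤ m+n`, `P ê_i = 0` for `i > m+n`,
`P f̂_j = u_{m+n+j}` for `j ≤ n`, `P f̂_j = 0` for `j > n`. -/
def projMat (m n : ℕ) : Matrix (Fin (m + 2*n)) (Fin (2*(m + 2*n))) ℂ :=
  fun i j => if ((j : ℕ) = (i : ℕ) ∧ (i : ℕ) < m + n) ∨
      ((j : ℕ) = (i : ℕ) + n ∧ m + n ≤ (i : ℕ)) then 1 else 0

/-- The projection `P : V → W ≅ ℂ^(m+2n)` (composed with the identification `W ≅ ℂ^(m+2n)`
via `ê_i ↦ u_i`, `f̂_j ↦ u_{m+n+j}`). -/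
def proj (m n : ℕ) : (Fin (2*(m + 2*n)) → ℂ) →ₗ[ℂ] (Fin (m + 2*n) → ℂ) :=
  Matrix.toLin' (projMat m n)


/-- Index set for complete flags of length `m+2n`: `{0, …, m+2n}`. -/
abbrev flagIdxQ (m n : ℕ) := {i : ℕ // i ≤ m + 2*n}

-- `x = P ∘ z ∘ (P|_L)⁻¹ ∈ End(ℂ^(m+2n))`, defined whenever `P` restricts to a
-- bijection from `L` onto `W ≅ ℂ^(m+2n)` (junk value `0` otherwise).
open Classical in
noncomputable def flagX (m n : ℕ) (L : Submodule ℂ (Fin (2*(m + 2*n)) → ℂ)) :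
    Module.End ℂ (Fin (m + 2*n) → ℂ) :=
  if h : Function.Bijective ((proj m n).domRestrict L) then
    (proj m n) ∘ₗ (bigZ m n) ∘ₗ L.subtype ∘ₗ
      (LinearEquiv.ofBijective ((proj m n).domRestrict L) h).symm.toLinearMap
  else 0

/-- The set `Q` of complete flags `0 = L_0 ⊂ L_1 ⊂ ⋯ ⊂ L_{m+2n}` of subspaces of `V`
with `dim L_i = i`, `z L_i ⊆ L_{i−1}`, and `P(L_{m+2n}) = W`. -/
def QSet (m n : ℕ) : Set (flagIdxQ m n → Submodule ℂ (Fin (2*(m + 2*n)) → ℂ)) :=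
  { L | (∀ i, i.val = 0 → L i = ⊥) ∧
      (∀ i, Module.finrank ℂ (L i) = i.val) ∧
      (∀ i j, i.val ≤ j.val → L i ≤ L j) ∧
      (∀ i j, i.val = j.val + 1 → ∀ v ∈ L i, bigZ m n v ∈ L j) ∧
      (∀ i, i.val = m + 2*n → (L i).map (proj m n) = ⊤) }

/-- The map `α` sending a flag `(L_•) ∈ Q` to the pair
`((P L_0 ⊂ P L_1 ⊂ ⋯ ⊂ P L_{m+2n} = W), x)` with `x = P ∘ z ∘ (P|_{L_{m+2n}})⁻¹`. -/
noncomputable def betaMap (m n : ℕ)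
    (L : flagIdxQ m n → Submodule ℂ (Fin (2*(m + 2*n)) → ℂ)) :
    (flagIdxQ m n → Submodule ℂ (Fin (m + 2*n) → ℂ)) ×
      Module.End ℂ (Fin (m + 2*n) → ℂ) :=
  (fun i => (L i).map (proj m n), flagX m n (L ⟨m + 2*n, le_refl _⟩))

/-- The set of pairs `((V_1 ⊂ ⋯ ⊂ V_{m+2n} = ℂ^(m+2n)), x)` where `(V_i)` is a complete
flag in `ℂ^(m+2n)`, `x ∈ S_n'`, and `x V_i ⊆ V_{i−1}` for all `i` (with `V_0 = 0`). -/
def BSet (m n : ℕ) : Set ((flagIdxQ m n → Submodule ℂ (Fin (m + 2*n) → ℂ)) ×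
    Module.End ℂ (Fin (m + 2*n) → ℂ)) :=
  { p | p.2 ∈ slice' m n ∧
      (∀ i, i.val = 0 → p.1 i = ⊥) ∧
      (∀ i, Module.finrank ℂ (p.1 i) = i.val) ∧
      (∀ i j, i.val ≤ j.val → p.1 i ≤ p.1 j) ∧
      (∀ i, i.val = m + 2*n → p.1 i = ⊤) ∧
      (∀ i j, i.val = j.val + 1 → ∀ v ∈ p.1 i, p.2 v ∈ p.1 j) }

section StrictFlag

variable {K E E' : Type*} [Semiring K] [AddCommMonoid E] [Module K E] [AddCommMonoid E']
  [Module K E'] {N : ℕ} {x : Module.End K E} {F : {i : ℕ // i ≤ N} → Submodule K E}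

/-- A flag `0 = F_0 ⊆ F_1 ⊆ ⋯ ⊆ F_N` with `dim F_i = i` and `x F_i ⊆ F_{i-1}`; for `dim E = N`
this is a point of the Springer fibre of `x`. It collects the conditions common to `QSet` and
`BSet`, in their form, so that no index is ever decremented. -/
structure IsStrictFlag (x : Module.End K E) (F : {i : ℕ // i ≤ N} → Submodule K E) : Prop where
  eq_bot : ∀ i, i.val = 0 → F i = ⊥
  finrank_eq : ∀ i, finrank K (F i) = i.val
  mono : ∀ i j, i.val ≤ j.val → F i ≤ F j
  apply_mem_pred : ∀ i j, i.val = j.val + 1 → ∀ v ∈ F i, x v ∈ F j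

namespace IsStrictFlag

lemma le_last (hF : IsStrictFlag x F) (i : {i : ℕ // i ≤ N}) : F i ≤ F ⟨N, le_rfl⟩ :=
  hF.mono _ _ i.2

lemma apply_mem (hF : IsStrictFlag x F) (i : {i : ℕ // i ≤ N}) {v : E} (hv : v ∈ F i) :
    x v ∈ F i := by
  obtain ⟨_ | k, hk⟩ := i
  · rw [hF.eq_bot _ rfl, Submodule.mem_bot] at hv
    rw [hv, map_zero]
    exact zero_mem _
  · exact hF.mono ⟨k, by omega⟩ _ k.le_succ (hF.apply_mem_pred _ ⟨k, by omega⟩ rfl v hv)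

lemma pow_apply_mem (hF : IsStrictFlag x F) (k : ℕ) {i j : {i : ℕ // i ≤ N}}
    (hij : i.val = j.val + k) {v : E} (hv : v ∈ F i) : (x ^ k) v ∈ F j := by
  induction k generalizing j with
  | zero => exact hF.mono i j hij.le hv
  | succ k ih =>
    rw [pow_succ', Module.End.mul_apply]
    exact hF.apply_mem_pred ⟨j + 1, by omega⟩ j rfl _ (ih (by simp only; omega))

lemma pow_eq_zero (hF : IsStrictFlag x F) (htop : F ⟨N, le_rfl⟩ = ⊤) : x ^ N = 0 := by
  ext v
  have hmem : (x ^ N) v ∈ F ⟨0, N.zero_le⟩ :=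
    hF.pow_apply_mem N (Nat.zero_add N).symm (htop ▸ Submodule.mem_top)
  rwa [hF.eq_bot _ rfl, Submodule.mem_bot] at hmem

lemma map (hF : IsStrictFlag x F) {y : Module.End K E'} {f : E →ₗ[K] E'}
    (hf : Set.InjOn f (F ⟨N, le_rfl⟩)) (hyx : ∀ v ∈ F ⟨N, le_rfl⟩, y (f v) = f (x v)) :
    IsStrictFlag y fun i => (F i).map f where
  eq_bot i hi := by rw [hF.eq_bot i hi, Submodule.map_bot]
  finrank_eq i := by
    have hinj : Function.Injective (f.domRestrict (F i)) :=
      Set.injOn_iff_injective.1 (hf.mono (hF.le_last i))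
    rw [← LinearMap.range_domRestrict, LinearMap.finrank_range_of_inj hinj, hF.finrank_eq]
  mono i j hij := Submodule.map_mono (hF.mono i j hij)
  apply_mem_pred := by
    rintro i j hij _ ⟨v, hv, rfl⟩
    exact ⟨x v, hF.apply_mem_pred i j hij v hv, (hyx v (hF.le_last i hv)).symm⟩

end IsStrictFlag

end StrictFlag

section Observable

variable {K V W : Type*} [Semiring K] [AddCommMonoid V] [Module K V] [AddCommMonoid W] [Module K W]
  {z : Module.End K V} {P : V →ₗ[K] W}

/-- The pair `(z, P)` is observable, in the sense of control theory: a vector `v` is determined by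
the sequence `P v, P z v, P z² v, …`. -/
def IsObservable (z : Module.End K V) (P : V →ₗ[K] W) : Prop :=
  Function.Injective fun (v : V) (k : ℕ) => P ((z ^ k) v)

lemma pow_apply_map_of_mem {x : Module.End K W} {U : Submodule K V}
    (hU : ∀ v ∈ U, z v ∈ U ∧ x (P v) = P (z v)) (k : ℕ) {v : V} (hv : v ∈ U) :
    (x ^ k) (P v) = P ((z ^ k) v) := by
  induction k generalizing v with
  | zero => rfl
  | succ k ih =>
    rw [pow_succ, pow_succ, Module.End.mul_apply, Module.End.mul_apply, (hU v hv).2,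
      ih (hU v hv).1]

lemma IsObservable.injOn_map (hobs : IsObservable z P) (x : Module.End K W) :
    Set.InjOn (Submodule.map P) {U | ∀ v ∈ U, z v ∈ U ∧ x (P v) = P (z v)} := by
  have le_of_map_le {U U' : Submodule K V} (hU : ∀ v ∈ U, z v ∈ U ∧ x (P v) = P (z v))
      (hU' : ∀ v ∈ U', z v ∈ U' ∧ x (P v) = P (z v)) (hle : U.map P ≤ U'.map P) : U ≤ U' := by
    intro v hv
    obtain ⟨v', hv', hP⟩ := hle (Submodule.mem_map_of_mem hv)
    obtain rfl : v' = v := hobs <| funext fun k => by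
      simp only [← pow_apply_map_of_mem hU k hv, ← pow_apply_map_of_mem hU' k hv', hP]
    exact hv'
  exact fun U hU U' hU' h => le_antisymm (le_of_map_le hU hU' h.le) (le_of_map_le hU' hU h.ge)

end Observable

section UnitRow

variable {R ι κ : Type*} [CommSemiring R] [Fintype κ] [DecidableEq κ] {A : Matrix ι κ R} {i : ι}

lemma toLin'_apply_of_row_eq_single {j : κ} (h : ∀ j', A i j' = if j' = j then 1 else 0)
    (v : κ → R) : Matrix.toLin' A v i = v j := by
  simp [Matrix.mulVec, dotProduct, h]

lemma toLin'_apply_of_row_eq_zero (h : ∀ j, A i j = 0) (v : κ → R) :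
    Matrix.toLin' A v i = 0 := by
  simp [Matrix.mulVec, dotProduct, h]

end UnitRow

section BlockCoordinates

variable {m n : ℕ}

/-- The coordinate on `V` along `ê_{k+1}` (for `b = 0`) or `f̂_{k+1}` (for `b = 1`), extended by
zero to `k ≥ m+2n` so that `bigZ` shifts it without a boundary case. -/
def bigCoord (m n : ℕ) (b : Fin 2) (k : ℕ) : (Fin (2 * (m + 2 * n)) → ℂ) →ₗ[ℂ] ℂ :=
  if h : k < m + 2 * n then LinearMap.proj (finProdFinEquiv (b, ⟨k, h⟩)) else 0

/-- The sizes `m+n` and `n` of the two Jordan blocks of `z_n`. -/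
def blockLen (m n : ℕ) (b : Fin 2) : ℕ := if b = 0 then m + n else n

lemma blockIdx_lt {b : Fin 2} {k : ℕ} (hk : k < blockLen m n b) :
    b * (m + n) + k < m + 2 * n := by
  fin_cases b <;> grind [blockLen]

/-- The index, in the standard basis of `ℂ^(m+2n)`, of the vector number `k` (counted from `0`) of
the Jordan block `b` of `z_n`. -/
def blockIdx {b : Fin 2} {k : ℕ} (hk : k < blockLen m n b) : Fin (m + 2 * n) :=
  ⟨b * (m + n) + k, blockIdx_lt hk⟩

/-- The coordinate on `ℂ^(m+2n)` along the vector number `k` (counted from `0`) of the Jordan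
block `b` of `z_n`, extended by zero past the end of the block. -/
def blockCoord (m n : ℕ) (b : Fin 2) (k : ℕ) : (Fin (m + 2 * n) → ℂ) →ₗ[ℂ] ℂ :=
  if h : k < blockLen m n b then LinearMap.proj (blockIdx h) else 0

lemma bigCoord_apply {b : Fin 2} {k : ℕ} (hk : k < m + 2 * n) (v : Fin (2 * (m + 2 * n)) → ℂ) :
    bigCoord m n b k v = v (finProdFinEquiv (b, ⟨k, hk⟩)) := by
  simp [bigCoord, hk]

lemma bigCoord_eq_zero {b : Fin 2} {k : ℕ} (hk : m + 2 * n ≤ k) : bigCoord m n b k = 0 :=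
  dif_neg hk.not_gt

lemma blockCoord_apply {b : Fin 2} {k : ℕ} (hk : k < blockLen m n b) (w : Fin (m + 2 * n) → ℂ) :
    blockCoord m n b k w = w (blockIdx hk) := by
  simp [blockCoord, hk]

lemma blockCoord_eq_zero {b : Fin 2} {k : ℕ} (hk : blockLen m n b ≤ k) : blockCoord m n b k = 0 :=
  dif_neg hk.not_gt

lemma blockLen_le (b : Fin 2) : blockLen m n b ≤ m + 2 * n := by
  unfold blockLen
  split_ifs <;> omega

lemma exists_blockIdx_eq (i : Fin (m + 2 * n)) :
    ∃ (b : Fin 2) (k : ℕ) (hk : k < blockLen m n b), blockIdx hk = i := by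
  by_cases hi : (i : ℕ) < m + n
  · exact ⟨0, i, by grind [blockLen], by grind [blockIdx]⟩
  · exact ⟨1, i - (m + n), by grind [blockLen], by grind [blockIdx]⟩

lemma ext_bigCoord {v v' : Fin (2 * (m + 2 * n)) → ℂ}
    (h : ∀ b k, bigCoord m n b k v = bigCoord m n b k v') : v = v' := by
  ext i
  obtain ⟨⟨b, k⟩, rfl⟩ := finProdFinEquiv.surjective i
  simpa only [bigCoord_apply k.2] using h b k

lemma ext_blockCoord {w w' : Fin (m + 2 * n) → ℂ}
    (h : ∀ b k, k < blockLen m n b → blockCoord m n b k w = blockCoord m n b k w') : w = w' := by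
  ext i
  obtain ⟨b, k, hk, rfl⟩ := exists_blockIdx_eq i
  simpa only [blockCoord_apply hk] using h b k hk

lemma bigCoord_bigZ (b : Fin 2) (k : ℕ) (v : Fin (2 * (m + 2 * n)) → ℂ) :
    bigCoord m n b k (bigZ m n v) = bigCoord m n b (k + 1) v := by
  rcases lt_trichotomy (k + 1) (m + 2 * n) with hk | hk | hk
  · rw [bigCoord_apply (by omega), bigCoord_apply hk]
    refine toLin'_apply_of_row_eq_single (A := bigZMat m n) (fun j => if_congr ?_ rfl rfl) v
    fin_cases b <;> grind [finProdFinEquiv_apply_val]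
  · rw [bigCoord_apply (by omega), bigCoord_eq_zero hk.ge, LinearMap.zero_apply]
    refine toLin'_apply_of_row_eq_zero (fun j => if_neg ?_) v
    fin_cases b <;> grind [finProdFinEquiv_apply_val]
  · rw [bigCoord_eq_zero (by omega), bigCoord_eq_zero hk.le, LinearMap.zero_apply,
      LinearMap.zero_apply]

lemma blockCoord_zn (b : Fin 2) (k : ℕ) (w : Fin (m + 2 * n) → ℂ) :
    blockCoord m n b k (zn m n w) = blockCoord m n b (k + 1) w := by
  rcases lt_trichotomy (k + 1) (blockLen m n b) with hk | hk | hk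
  · rw [blockCoord_apply (by omega), blockCoord_apply hk]
    refine toLin'_apply_of_row_eq_single (A := zMat m n) (fun j => if_congr ?_ rfl rfl) w
    fin_cases b <;> grind [blockIdx, blockLen]
  · rw [blockCoord_apply (by omega), blockCoord_eq_zero hk.ge, LinearMap.zero_apply]
    refine toLin'_apply_of_row_eq_zero (fun j => if_neg ?_) w
    fin_cases b <;> grind [blockIdx, blockLen]
  · rw [blockCoord_eq_zero (by omega), blockCoord_eq_zero hk.le, LinearMap.zero_apply,
      LinearMap.zero_apply]

lemma blockCoord_proj {b : Fin 2} {k : ℕ} (hk : k < blockLen m n b)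
    (v : Fin (2 * (m + 2 * n)) → ℂ) :
    blockCoord m n b k (proj m n v) = bigCoord m n b k v := by
  rw [blockCoord_apply hk, bigCoord_apply (hk.trans_le (blockLen_le b))]
  refine toLin'_apply_of_row_eq_single (A := projMat m n) (fun j => if_congr ?_ rfl rfl) v
  fin_cases b <;> grind [blockIdx, blockLen, finProdFinEquiv_apply_val]

lemma bigCoord_bigZ_pow (b : Fin 2) (j k : ℕ) (v : Fin (2 * (m + 2 * n)) → ℂ) :
    bigCoord m n b k ((bigZ m n ^ j) v) = bigCoord m n b (k + j) v := by
  induction j generalizing k with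
  | zero => rfl
  | succ j ih => rw [pow_succ', Module.End.mul_apply, bigCoord_bigZ, ih, add_right_comm, add_assoc]

lemma isObservable_bigZ_proj (hn : 1 ≤ n) : IsObservable (bigZ m n) (proj m n) := by
  intro v v' h
  refine ext_bigCoord fun b k => ?_
  have hb : 0 < blockLen m n b := by
    unfold blockLen
    split_ifs <;> omega
  have hcoord (u : Fin (2 * (m + 2 * n)) → ℂ) :
      bigCoord m n b k u = blockCoord m n b 0 (proj m n ((bigZ m n ^ k) u)) := by
    rw [blockCoord_proj hb, bigCoord_bigZ_pow, zero_add]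
  rw [hcoord, hcoord]
  exact congrArg _ (congrFun h k)

end BlockCoordinates

section Slice

variable {m n : ℕ} {x : Module.End ℂ (Fin (m + 2 * n) → ℂ)}

lemma stdVec_succ (i : Fin (m + 2 * n)) : stdVec m n (i + 1) = Pi.single i 1 := by
  ext j
  simp [stdVec, Pi.single_apply, Fin.ext_iff]

lemma mem_span_stdVec_pair_iff {a b : ℕ} {w : Fin (m + 2 * n) → ℂ} :
    w ∈ Submodule.span ℂ {stdVec m n a, stdVec m n b} ↔
      ∀ i : Fin (m + 2 * n), (i : ℕ) + 1 ≠ a → (i : ℕ) + 1 ≠ b → w i = 0 := by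
  constructor
  · intro hw i ha hb
    obtain ⟨c, d, rfl⟩ := Submodule.mem_span_pair.1 hw
    simp [stdVec, ha, hb]
  · intro hw
    rw [← (Pi.basisFun ℂ (Fin (m + 2 * n))).sum_repr w]
    refine Submodule.sum_mem _ fun i _ => ?_
    rw [Pi.basisFun_apply, Pi.basisFun_repr, ← stdVec_succ]
    by_cases hi : (i : ℕ) + 1 = a ∨ (i : ℕ) + 1 = b
    · exact Submodule.smul_mem _ _ (Submodule.subset_span
        (hi.imp (congrArg (stdVec m n)) (congrArg (stdVec m n))))
    · rw [hw i (fun ha => hi (.inl ha)) (fun hb => hi (.inr hb)), zero_smul]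
      exact zero_mem _

lemma mem_span_stdVec_last_iff {w : Fin (m + 2 * n) → ℂ} :
    w ∈ Submodule.span ℂ {stdVec m n (m + n), stdVec m n (m + 2 * n)} ↔
      ∀ b k, k + 1 < blockLen m n b → blockCoord m n b k w = 0 := by
  rw [mem_span_stdVec_pair_iff]
  constructor
  · intro hw b k hk
    rw [blockCoord_apply (by omega)]
    apply hw <;> fin_cases b <;> grind [blockIdx, blockLen]
  · intro hw i hi hi'
    obtain ⟨b, k, hk, rfl⟩ := exists_blockIdx_eq i
    refine (blockCoord_apply hk w).symm.trans (hw b k ?_)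
    fin_cases b <;> grind [blockIdx, blockLen]

lemma mem_slice'_iff_forall_sub_mem : x ∈ slice' m n ↔
    ∀ w, x w - zn m n w ∈ Submodule.span ℂ {stdVec m n (m + n), stdVec m n (m + 2 * n)} := by
  refine ⟨fun hx => ?_, fun hx j => hx _⟩
  set S := Submodule.span ℂ {stdVec m n (m + n), stdVec m n (m + 2 * n)}
  have hle : Submodule.span ℂ (Set.range (Pi.basisFun ℂ (Fin (m + 2 * n)))) ≤
      S.comap (x - zn m n) := by
    rw [Submodule.span_le]
    rintro _ ⟨i, rfl⟩
    rw [Pi.basisFun_apply, ← stdVec_succ]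
    exact hx (i + 1)
  rw [Module.Basis.span_eq] at hle
  exact fun w => hle Submodule.mem_top

lemma mem_slice'_iff : x ∈ slice' m n ↔ ∀ b k, k + 1 < blockLen m n b → ∀ w,
    blockCoord m n b k (x w) = blockCoord m n b (k + 1) w := by
  simp only [mem_slice'_iff_forall_sub_mem, mem_span_stdVec_last_iff, map_sub, blockCoord_zn,
    sub_eq_zero]
  exact ⟨fun h b k hk w => h w b k hk, fun h w b k hk => h b k hk w⟩

lemma blockCoord_pow_of_mem_slice' (hx : x ∈ slice' m n) {b : Fin 2} {j k : ℕ}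
    (hk : k + j < blockLen m n b) (w : Fin (m + 2 * n) → ℂ) :
    blockCoord m n b k ((x ^ j) w) = blockCoord m n b (k + j) w := by
  induction j generalizing k with
  | zero => rfl
  | succ j ih =>
    rw [pow_succ', Module.End.mul_apply, mem_slice'_iff.1 hx b k (by omega), ih (by omega),
      add_right_comm, add_assoc]

/-- The section `s : W → V` of `P` attached to `x`: the coordinates of `s w` along `ê_{k+1}` and
`f̂_{k+1}` are `(x^k w)_1` and `(x^k w)_{m+n+1}`, as they must be if `P s = id` and `z s = s x`. -/
def secMap (x : Module.End ℂ (Fin (m + 2 * n) → ℂ)) :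
    (Fin (m + 2 * n) → ℂ) →ₗ[ℂ] (Fin (2 * (m + 2 * n)) → ℂ) :=
  LinearMap.pi fun i =>
    blockCoord m n (finProdFinEquiv.symm i).1 0 ∘ₗ x ^ ((finProdFinEquiv.symm i).2 : ℕ)

lemma bigCoord_secMap (hx : x ^ (m + 2 * n) = 0) (b : Fin 2) (k : ℕ) (w : Fin (m + 2 * n) → ℂ) :
    bigCoord m n b k (secMap x w) = blockCoord m n b 0 ((x ^ k) w) := by
  rcases lt_or_ge k (m + 2 * n) with hk | hk
  · simp only [bigCoord_apply hk, secMap, LinearMap.pi_apply, LinearMap.comp_apply,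
      Equiv.symm_apply_apply]
  · rw [bigCoord_eq_zero hk, pow_eq_zero_of_le hk hx, LinearMap.zero_apply, LinearMap.zero_apply,
      map_zero]

lemma bigZ_secMap (hx : x ^ (m + 2 * n) = 0) (w : Fin (m + 2 * n) → ℂ) :
    bigZ m n (secMap x w) = secMap x (x w) :=
  ext_bigCoord fun b k => by
    rw [bigCoord_bigZ, bigCoord_secMap hx, bigCoord_secMap hx, pow_succ, Module.End.mul_apply]

lemma proj_secMap (hS : x ∈ slice' m n) (hx : x ^ (m + 2 * n) = 0) (w : Fin (m + 2 * n) → ℂ) :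
    proj m n (secMap x w) = w :=
  ext_blockCoord fun b k hk => by
    rw [blockCoord_proj hk, bigCoord_secMap hx,
      blockCoord_pow_of_mem_slice' hS (by rwa [zero_add]), zero_add]

end Slice

section CompressedEndomorphism

variable {m n : ℕ} {L : Submodule ℂ (Fin (2 * (m + 2 * n)) → ℂ)}

lemma flagX_apply_proj (hL : Function.Bijective ((proj m n).domRestrict L))
    {v : Fin (2 * (m + 2 * n)) → ℂ} (hv : v ∈ L) :
    flagX m n L (proj m n v) = proj m n (bigZ m n v) := by
  have hsymm : (LinearEquiv.ofBijective ((proj m n).domRestrict L) hL).symm (proj m n v) =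
      ⟨v, hv⟩ := by
    rw [LinearEquiv.symm_apply_eq]
    rfl
  simp [flagX, hL, hsymm]

lemma flagX_eq_of_apply_proj_eq (hL : Function.Bijective ((proj m n).domRestrict L))
    {x : Module.End ℂ (Fin (m + 2 * n) → ℂ)}
    (hx : ∀ v ∈ L, x (proj m n v) = proj m n (bigZ m n v)) : flagX m n L = x := by
  refine LinearMap.ext fun w => ?_
  obtain ⟨⟨v, hv⟩, rfl⟩ := hL.surjective w
  rw [LinearMap.domRestrict_apply, flagX_apply_proj hL hv, hx v hv]

lemma flagX_mem_slice' (hL : Function.Bijective ((proj m n).domRestrict L)) :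
    flagX m n L ∈ slice' m n := by
  refine mem_slice'_iff.2 fun b k hk w => ?_
  obtain ⟨⟨v, hv⟩, rfl⟩ := hL.surjective w
  rw [LinearMap.domRestrict_apply, flagX_apply_proj hL hv, blockCoord_proj (by omega),
    bigCoord_bigZ, blockCoord_proj hk]

end CompressedEndomorphism

section Flags

variable {m n : ℕ} {L : flagIdxQ m n → Submodule ℂ (Fin (2 * (m + 2 * n)) → ℂ)}

lemma mem_QSet_iff : L ∈ QSet m n ↔
    IsStrictFlag (bigZ m n) L ∧ (L ⟨m + 2 * n, le_rfl⟩).map (proj m n) = ⊤ :=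
  ⟨fun ⟨h0, hd, hm, hz, ht⟩ => ⟨⟨h0, hd, hm, hz⟩, ht _ rfl⟩,
    fun ⟨⟨h0, hd, hm, hz⟩, ht⟩ => ⟨h0, hd, hm, hz, fun ⟨_, _⟩ hi => by subst hi; exact ht⟩⟩

lemma mem_BSet_iff {p : (flagIdxQ m n → Submodule ℂ (Fin (m + 2 * n) → ℂ)) ×
    Module.End ℂ (Fin (m + 2 * n) → ℂ)} : p ∈ BSet m n ↔
    p.2 ∈ slice' m n ∧ IsStrictFlag p.2 p.1 ∧ p.1 ⟨m + 2 * n, le_rfl⟩ = ⊤ :=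
  ⟨fun ⟨hS, h0, hd, hm, ht, hx⟩ => ⟨hS, ⟨h0, hd, hm, hx⟩, ht _ rfl⟩,
    fun ⟨hS, ⟨h0, hd, hm, hx⟩, ht⟩ =>
      ⟨hS, h0, hd, hm, fun ⟨_, _⟩ hi => by subst hi; exact ht, hx⟩⟩

lemma domRestrict_proj_bijective (hL : L ∈ QSet m n) :
    Function.Bijective ((proj m n).domRestrict (L ⟨m + 2 * n, le_rfl⟩)) := by
  obtain ⟨hflag, htop⟩ := mem_QSet_iff.1 hL
  have hsurj : Function.Surjective ((proj m n).domRestrict (L ⟨m + 2 * n, le_rfl⟩)) := by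
    rw [← LinearMap.range_eq_top, LinearMap.range_domRestrict, htop]
  refine ⟨(LinearMap.injective_iff_surjective_of_finrank_eq_finrank ?_).2 hsurj, hsurj⟩
  rw [hflag.finrank_eq, finrank_fin_fun]

lemma betaMap_mapsTo : Set.MapsTo (betaMap m n) (QSet m n) (BSet m n) := by
  intro L hL
  have hbij := domRestrict_proj_bijective hL
  obtain ⟨hflag, htop⟩ := mem_QSet_iff.1 hL
  exact mem_BSet_iff.2 ⟨flagX_mem_slice' hbij,
    hflag.map (Set.injOn_iff_injective.2 hbij.injective) fun v hv => flagX_apply_proj hbij hv,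
    htop⟩

lemma betaMap_injOn (hn : 1 ≤ n) : Set.InjOn (betaMap m n) (QSet m n) := by
  have hmem {L} (hL : L ∈ QSet m n) (i : flagIdxQ m n) : ∀ v ∈ L i, bigZ m n v ∈ L i ∧
      (betaMap m n L).2 (proj m n v) = proj m n (bigZ m n v) := fun v hv =>
    have hflag := (mem_QSet_iff.1 hL).1
    ⟨hflag.apply_mem i hv, flagX_apply_proj (domRestrict_proj_bijective hL) (hflag.le_last i hv)⟩
  intro L hL L' hL' h
  funext i
  exact (isObservable_bigZ_proj hn).injOn_map (betaMap m n L).2 (hmem hL i) (h ▸ hmem hL' i)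
    (congrFun (congrArg Prod.fst h) i)

lemma betaMap_surjOn : Set.SurjOn (betaMap m n) (QSet m n) (BSet m n) := by
  rintro ⟨F, x⟩ hp
  obtain ⟨hS, hflag, htop⟩ := mem_BSet_iff.1 hp
  have hnil : x ^ (m + 2 * n) = 0 := hflag.pow_eq_zero htop
  have hPs : Function.LeftInverse (proj m n) (secMap x) := proj_secMap hS hnil
  have hcomp : proj m n ∘ₗ secMap x = LinearMap.id := LinearMap.ext fun w => hPs w
  have hmap (i : flagIdxQ m n) : ((F i).map (secMap x)).map (proj m n) = F i := by
    rw [← Submodule.map_comp, hcomp, Submodule.map_id]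
  have hQ : (fun i => (F i).map (secMap x)) ∈ QSet m n :=
    mem_QSet_iff.2 ⟨hflag.map hPs.injective.injOn fun w _ => bigZ_secMap hnil w,
      (hmap _).trans htop⟩
  refine ⟨_, hQ, Prod.ext (funext hmap)
    (flagX_eq_of_apply_proj_eq (domRestrict_proj_bijective hQ) ?_)⟩
  rintro _ ⟨w, -, rfl⟩
  rw [bigZ_secMap hnil, hPs, hPs]

end Flags

/-- For every flag `(L_•) ∈ Q`, `P` restricts to a linear isomorphism
`L_{m+2n} → W`, and the map `α : (L_•) ↦ ((P L_•), P ∘ z ∘ (P|_{L_{m+2n}})⁻¹)` is a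
well-defined bijection from `Q` onto `S_n' ×_{sl} T*B_n` (Lemma 2.7 of the paper). -/
theorem betaMap_bijOn (m n : ℕ) (hn : 1 ≤ n) :
    (∀ L ∈ QSet m n,
      Function.Bijective ((proj m n).domRestrict (L ⟨m + 2*n, le_refl _⟩))) ∧
    Set.BijOn (betaMap m n) (QSet m n) (BSet m n) :=
  ⟨fun _ hL => domRestrict_proj_bijective hL, betaMap_mapsTo, betaMap_injOn hn, betaMap_surjOn⟩
end
end

section
/- If x ∈ S_n' has rank at most m+2n−2 (equivalently, if there exists a subspace U ⊆ ℂ^{m+2n} of dimension m+2n−2 with im x ⊆ U), then ker x = span{u_1, u_{m+n+1}}, and in particular x u_1 = x u_{m+n+1} = 0. (Kernel claim from the proof of Lemma 4.14 of the paper: every point of X_{n,m+2n−1} has the same kernel ⟨e_1, f_1⟩.) -/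
/-!
Outside rows `m+n` and `m+2n`, an element `x` of `S_n'` agrees with `z_n`, so the entries of `x v`
outside those rows are exactly the entries of `v` other than the first and the `(m+n+1)`-st. Hence
`ker x ⊆ span{u_1, u_{m+n+1}}` for every `x ∈ S_n'`, and the rank bound together with rank–nullity
turns this inclusion into an equality of dimensions.
-/

open Module BigOperators

noncomputable section

theorem ker_eq_of_ker_le_of_finrank_range_add_finrank_le {K V W : Type*} [DivisionRing K]
    [AddCommGroup V] [Module K V] [FiniteDimensional K V] [AddCommGroup W] [Module K W]
    {f : V →ₗ[K] W} {P : Submodule K V} (hker : LinearMap.ker f ≤ P)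
    (hrank : finrank K (LinearMap.range f) + finrank K P ≤ finrank K V) :
    LinearMap.ker f = P := by
  have hnullity := f.finrank_range_add_finrank_ker
  exact Submodule.eq_of_le_of_finrank_le hker (by omega)

theorem finrank_span_pair_le_two {R M : Type*} [Semiring R] [StrongRankCondition R]
    [AddCommMonoid M] [Module R M] (v w : M) : finrank R (Submodule.span R {v, w}) ≤ 2 := by
  classical
  rw [← Finset.coe_pair]
  exact (finrank_span_finset_le_card {v, w}).trans Finset.card_le_two

variable {m n : ℕ}

theorem sum_smul_stdVec (v : Fin (m + 2 * n) → ℂ) : ∑ j, v j • stdVec m n (j + 1) = v := by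
  ext i
  simp [stdVec, Fin.val_inj]

theorem mem_span_stdVec_pair {k l : ℕ} {v : Fin (m + 2 * n) → ℂ} :
    v ∈ Submodule.span ℂ {stdVec m n k, stdVec m n l} ↔
      ∀ i : Fin (m + 2 * n), (i : ℕ) + 1 ≠ k → (i : ℕ) + 1 ≠ l → v i = 0 := by
  constructor
  · intro hv i hk hl
    obtain ⟨a, b, rfl⟩ := Submodule.mem_span_pair.mp hv
    simp [stdVec, hk, hl]
  · intro hv
    rw [← sum_smul_stdVec v]
    refine Submodule.sum_mem _ fun j _ => ?_
    by_cases hk : (j : ℕ) + 1 = k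
    · exact Submodule.smul_mem _ _ (Submodule.subset_span (by simp [hk]))
    by_cases hl : (j : ℕ) + 1 = l
    · exact Submodule.smul_mem _ _ (Submodule.subset_span (by simp [hl]))
    · simp [hv j hk hl]

theorem zn_apply_of_val_eq_succ {i j : Fin (m + 2 * n)} (hij : (j : ℕ) = i + 1)
    (hj : (j : ℕ) ≠ m + n) (v : Fin (m + 2 * n) → ℂ) : zn m n v i = v j := by
  have hrow : zMat m n i = Pi.single j 1 := by
    ext k
    rw [zMat, Pi.single_apply]
    grind
  simp [zn, Matrix.mulVec, hrow]

section slice'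

variable {x : Module.End ℂ (Fin (m + 2 * n) → ℂ)}

theorem sub_zn_apply_mem_span_of_mem_slice' (hx : x ∈ slice' m n) (v : Fin (m + 2 * n) → ℂ) :
    x v - zn m n v ∈ Submodule.span ℂ {stdVec m n (m + n), stdVec m n (m + 2 * n)} := by
  rw [← LinearMap.sub_apply, ← sum_smul_stdVec v, map_sum]
  refine Submodule.sum_mem _ fun j _ => ?_
  rw [map_smul]
  exact Submodule.smul_mem _ _ (hx (j + 1))

theorem apply_of_mem_slice'_of_val_eq_succ (hx : x ∈ slice' m n) {i j : Fin (m + 2 * n)}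
    (hij : (j : ℕ) = i + 1) (hj : (j : ℕ) ≠ m + n) (v : Fin (m + 2 * n) → ℂ) : x v i = v j := by
  have hsub : (x v - zn m n v) i = 0 :=
    mem_span_stdVec_pair.mp (sub_zn_apply_mem_span_of_mem_slice' hx v) i (by omega) (by omega)
  calc x v i = zn m n v i := sub_eq_zero.mp hsub
    _ = v j := zn_apply_of_val_eq_succ hij hj v

theorem ker_le_span_of_mem_slice' (hx : x ∈ slice' m n) :
    LinearMap.ker x ≤ Submodule.span ℂ {stdVec m n 1, stdVec m n (m + n + 1)} := by
  intro v hv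
  refine mem_span_stdVec_pair.mpr fun j hfirst hsecond => ?_
  have hpred : (j : ℕ) = (⟨j - 1, by omega⟩ : Fin (m + 2 * n)) + 1 := by grind
  rw [← apply_of_mem_slice'_of_val_eq_succ hx hpred (by omega) v, LinearMap.mem_ker.mp hv,
    Pi.zero_apply]

end slice'

/-- If `x ∈ S_n'` has rank at most `m+2n−2`, then
`ker x = span{u_1, u_{m+n+1}}`; in particular `x u_1 = x u_{m+n+1} = 0`. -/
theorem slice'_small_rank_ker (m n : ℕ) (hn : 1 ≤ n)
    (x : Module.End ℂ (Fin (m + 2*n) → ℂ)) (hx : x ∈ slice' m n)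
    (hrank : Module.finrank ℂ (LinearMap.range x) ≤ m + 2*n - 2) :
    LinearMap.ker x = Submodule.span ℂ {stdVec m n 1, stdVec m n (m + n + 1)} ∧
    x (stdVec m n 1) = 0 ∧ x (stdVec m n (m + n + 1)) = 0 := by
  have hker : LinearMap.ker x = Submodule.span ℂ {stdVec m n 1, stdVec m n (m + n + 1)} := by
    refine ker_eq_of_ker_le_of_finrank_range_add_finrank_le (ker_le_span_of_mem_slice' hx) ?_
    have hspan := finrank_span_pair_le_two (R := ℂ) (stdVec m n 1) (stdVec m n (m + n + 1))
    rw [Module.finrank_fin_fun]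
    omega
  refine ⟨hker, ?_, ?_⟩ <;> rw [← LinearMap.mem_ker, hker]
  · exact Submodule.mem_span_of_mem (Set.mem_insert _ _)
  · exact Submodule.mem_span_of_mem (Set.mem_insert_of_mem _ rfl)
end
end
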